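/- Assume Assumptions RS and QM. For the mode estimate sequence (y_t)_{t∈ℕ} obtained by the MS iteration starting from any y₁ ∈ ℝ^d, the density estimate sequence (f(y_t))_{t∈ℕ} is non-decreasing (f(y_t) ≤ f(y_{t+1}) for all t) and converges. -/

import Mathlib

open Set Filter Topology MeasureTheory
open scoped BigOperators RealInnerProductSpace

noncomputable section

/-- Euclidean space `ℝ^d`. -/
abbrev Euc (d : ℕ) := EuclideanSpace ℝ (Fin d)

/-- The convex subdifferential of a function `g` (viewed as a function on `[0,∞)`) at `u`. -/
def subdiffIci (g : ℝ → ℝ) (u : ℝ) : Set ℝ :=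
  {c : ℝ | ∀ v ∈ Set.Ici (0:ℝ), g v - g u ≥ c * (v - u)}

/-- Assumption RS: the kernel `K` is bounded, continuous, non-negative, normalized, and
radially symmetric with profile `Khat`. -/
structure AssumptionRS (d : ℕ) (K : Euc d → ℝ) (Khat : ℝ → ℝ) : Prop where
  bounded : ∃ M : ℝ, ∀ x, K x ≤ M
  cont : Continuous K
  nonneg : ∀ x, 0 ≤ K x
  normalized : ∫ x, K x = 1
  radial : ∀ x, K x = Khat (‖x‖ ^ 2 / 2)

/-- Assumption QM for the profile `Khat`, together with the selection `Kcheck`: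
`Khat` is convex and non-increasing on `[0,∞)`, its right derivative at `0` exists as a real
number and equals `-(Kcheck 0)` (i.e. `Kcheck 0 = -Khat'(0+) > -∞`), and for every `u > 0`,
`-(Kcheck u)` belongs to the subdifferential of `Khat` at `u`. -/
structure AssumptionQM (Khat Kcheck : ℝ → ℝ) : Prop where
  convexOn : ConvexOn ℝ (Set.Ici (0:ℝ)) Khat
  antitoneOn : AntitoneOn Khat (Set.Ici (0:ℝ))
  rderiv0 : Filter.Tendsto (fun v => (Khat v - Khat 0) / v)
      (nhdsWithin 0 (Set.Ioi 0)) (nhds (-(Kcheck 0)))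
  subdiff : ∀ u : ℝ, 0 < u → -(Kcheck u) ∈ subdiffIci Khat u

/-- The kernel density estimate `f(y) = (1/(n hᵈ)) ∑ᵢ K((y - xᵢ)/h)`. -/
def KDE (d n : ℕ) (K : Euc d → ℝ) (x : Fin n → Euc d) (h : ℝ) (y : Euc d) : ℝ :=
  (1 / ((n : ℝ) * h ^ d)) * ∑ i : Fin n, K (h⁻¹ • (y - x i))

/-- `f̌(y) = (1/(n hᵈ)) ∑ᵢ Ǩ(‖(y - xᵢ)/h‖²/2)`. -/
def fcheck (d n : ℕ) (Kcheck : ℝ → ℝ) (x : Fin n → Euc d) (h : ℝ) (y : Euc d) : ℝ :=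
  (1 / ((n : ℝ) * h ^ d)) * ∑ i : Fin n, Kcheck (‖h⁻¹ • (y - x i)‖ ^ 2 / 2)

/-- The mean shift vector `m(y)`: zero if `f̌(y) = 0`, and otherwise
`m(y) = ∑ᵢ Ǩ(‖(y - xᵢ)/h‖²/2)(xᵢ - y) / ∑ᵢ Ǩ(‖(y - xᵢ)/h‖²/2)`. -/
def msMap (d n : ℕ) (Kcheck : ℝ → ℝ) (x : Fin n → Euc d) (h : ℝ) (y : Euc d) : Euc d :=
  if fcheck d n Kcheck x h y = 0 then 0
  else (∑ i : Fin n, Kcheck (‖h⁻¹ • (y - x i)‖ ^ 2 / 2))⁻¹ •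
    ∑ i : Fin n, Kcheck (‖h⁻¹ • (y - x i)‖ ^ 2 / 2) • (x i - y)

/-- `y` is a mean shift iteration sequence: `y (t+1) = y t + m (y t)` for all `t`. -/
def MSSeq (d n : ℕ) (Kcheck : ℝ → ℝ) (x : Fin n → Euc d) (h : ℝ) (y : ℕ → Euc d) : Prop :=
  ∀ t : ℕ, y (t + 1) = y t + msMap d n Kcheck x h (y t)

/-- `f` has the Łojasiewicz property on the set `S`. -/
def LojasiewiczOn (d : ℕ) (f : Euc d → ℝ) (S : Set (Euc d)) : Prop :=
  ∃ ε > (0:ℝ), ∃ c > (0:ℝ), ∃ θ ∈ Set.Ico (0:ℝ) 1,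
    ∀ x' ∈ S, ∀ x ∈ S, ‖x' - x‖ < ε → 0 ≤ f x' - f x →
      ‖gradient f x‖ ≥ c * (f x' - f x) ^ θ

/-- `f` satisfies the Łojasiewicz inequality at `ybar` with exponent `θ`, on the set `S`. -/
def LojasiewiczAtWith (d : ℕ) (f : Euc d → ℝ) (S : Set (Euc d)) (ybar : Euc d) (θ : ℝ) : Prop :=
  ∃ ε > (0:ℝ), ∃ c > (0:ℝ),
    ∀ y ∈ S, ‖ybar - y‖ < ε → 0 ≤ f ybar - f y →
      ‖gradient f y‖ ≥ c * (f ybar - f y) ^ θ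

/-! Convexity places the profile above its tangent line of slope `-Ǩ(u)` at `u`, so at bandwidth `1`
and with weights `wᵢ`, `f(z) - f(y) ≥ ∑ᵢ wᵢ Ǩ(‖y - xᵢ‖²/2) (‖y - xᵢ‖² - ‖z - xᵢ‖²) / 2` for all `z`.
The right-hand side is a concave quadratic in `z` whose maximum, attained at `z = y + m(y)`, is
`f̌(y) ‖m(y)‖² / 2 ≥ 0`. Since the profile is non-increasing, `f` is bounded by `(∑ᵢ wᵢ) K̂(0)`.
Scaling points and data by `h⁻¹` reduces bandwidth `h` to bandwidth `1`, with all weights equal to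
`1/(n hᵈ)`. -/

namespace AssumptionQM

variable {Khat Kcheck : ℝ → ℝ}

theorem hasDerivWithinAt_zero (hQM : AssumptionQM Khat Kcheck) :
    HasDerivWithinAt Khat (-Kcheck 0) (Ioi 0) 0 := by
  rw [hasDerivWithinAt_iff_tendsto_slope' self_notMem_Ioi]
  simpa only [slope_fun_def_field, sub_zero] using hQM.rderiv0

theorem neg_mem_subdiffIci (hQM : AssumptionQM Khat Kcheck) {u : ℝ} (hu : 0 ≤ u) :
    -Kcheck u ∈ subdiffIci Khat u := by
  rcases hu.eq_or_lt with rfl | hu_pos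
  · intro v hv
    rcases (mem_Ici.mp hv).eq_or_lt with rfl | hv_pos
    · simp
    · have slope_ge : -Kcheck 0 ≤ slope Khat 0 v :=
        hQM.convexOn.le_slope_of_hasDerivWithinAt_Ioi self_mem_Ici hv hv_pos
          hQM.hasDerivWithinAt_zero
      rwa [slope_def_field, le_div_iff₀ (sub_pos.mpr hv_pos)] at slope_ge
  · exact hQM.subdiff u hu_pos

theorem Kcheck_nonneg (hQM : AssumptionQM Khat Kcheck) {u : ℝ} (hu : 0 ≤ u) : 0 ≤ Kcheck u := by
  have hu' : 0 ≤ u + 1 := by positivity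
  have tangent_le := hQM.neg_mem_subdiffIci hu (u + 1) hu'
  have le_at_u := hQM.antitoneOn hu hu' (le_add_of_nonneg_right zero_le_one)
  linarith

end AssumptionQM

section MeanShift

variable {ι E : Type*} [SeminormedAddCommGroup E]

section RadialKernelSum

variable [Fintype ι]

/-- The weighted kernel density estimate at `y`, of bandwidth `1` and with data points `x i`, for
the radial kernel with profile `g`; normalizing constants are absorbed into the weights `w`. -/
def radialKernelSum (w : ι → ℝ) (g : ℝ → ℝ) (x : ι → E) (y : E) : ℝ :=
  ∑ i, w i * g (‖y - x i‖ ^ 2 / 2)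

variable {w : ι → ℝ}

theorem radialKernelSum_nonneg {k : ℝ → ℝ} (hk : ∀ u, 0 ≤ u → 0 ≤ k u) (hw : ∀ i, 0 ≤ w i)
    (x : ι → E) (y : E) : 0 ≤ radialKernelSum w k x y :=
  Finset.sum_nonneg fun i _ => mul_nonneg (hw i) (hk _ (by positivity))

theorem radialKernelSum_le_of_antitoneOn {g : ℝ → ℝ} (hg : AntitoneOn g (Ici 0))
    (hw : ∀ i, 0 ≤ w i) (x : ι → E) (y : E) : radialKernelSum w g x y ≤ (∑ i, w i) * g 0 := by
  rw [Finset.sum_mul]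
  refine Finset.sum_le_sum fun i _ => mul_le_mul_of_nonneg_left ?_ (hw i)
  have arg_nonneg : 0 ≤ ‖y - x i‖ ^ 2 / 2 := by positivity
  exact hg self_mem_Ici arg_nonneg arg_nonneg

theorem AssumptionQM.sum_mul_norm_sq_sub_le_radialKernelSum_sub {Khat Kcheck : ℝ → ℝ}
    (hQM : AssumptionQM Khat Kcheck) (hw : ∀ i, 0 ≤ w i) (x : ι → E) (y z : E) :
    (∑ i, w i * Kcheck (‖y - x i‖ ^ 2 / 2) * (‖y - x i‖ ^ 2 - ‖z - x i‖ ^ 2)) / 2 ≤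
      radialKernelSum w Khat x z - radialKernelSum w Khat x y := by
  rw [radialKernelSum, radialKernelSum, ← Finset.sum_sub_distrib, Finset.sum_div]
  refine Finset.sum_le_sum fun i _ => ?_
  have tangent_le := hQM.neg_mem_subdiffIci (u := ‖y - x i‖ ^ 2 / 2) (by positivity)
    (‖z - x i‖ ^ 2 / 2) (mem_Ici.mpr (by positivity))
  linarith [mul_le_mul_of_nonneg_left tangent_le (hw i)]

end RadialKernelSum

variable [InnerProductSpace ℝ E]

theorem sum_mul_norm_sq_sub_norm_centerMass_sub_sq (s : Finset ι) (w : ι → ℝ) (v : ι → E) :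
    ∑ i ∈ s, w i * (‖v i‖ ^ 2 - ‖s.centerMass w v - v i‖ ^ 2) =
      (∑ i ∈ s, w i) * ‖s.centerMass w v‖ ^ 2 := by
  rcases eq_or_ne (∑ i ∈ s, w i) 0 with hw | hw
  · -- `centerMass` takes the junk value `0` here.
    simp [Finset.centerMass, hw]
  set c := s.centerMass w v
  have sum_smul : ∑ i ∈ s, w i • v i = (∑ i ∈ s, w i) • c := (smul_inv_smul₀ hw _).symm
  have sum_inner : ∑ i ∈ s, w i * ⟪c, v i⟫ = (∑ i ∈ s, w i) * ‖c‖ ^ 2 := by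
    simp only [← real_inner_smul_right, ← inner_sum]
    rw [sum_smul, real_inner_smul_right, real_inner_self_eq_norm_sq]
  calc ∑ i ∈ s, w i * (‖v i‖ ^ 2 - ‖c - v i‖ ^ 2)
      = ∑ i ∈ s, (2 * (w i * ⟪c, v i⟫) - w i * ‖c‖ ^ 2) :=
        Finset.sum_congr rfl fun i _ => by rw [norm_sub_sq_real]; ring
    _ = 2 * ∑ i ∈ s, w i * ⟪c, v i⟫ - (∑ i ∈ s, w i) * ‖c‖ ^ 2 := by
        rw [Finset.sum_sub_distrib, ← Finset.mul_sum, ← Finset.sum_mul]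
    _ = (∑ i ∈ s, w i) * ‖c‖ ^ 2 := by rw [sum_inner]; ring

variable [Fintype ι]

/-- The mean shift vector at `y` for bandwidth `1`. It is the center of mass of the displacements
`x i - y`, rather than the center of mass of the `x i` minus `y`, so that it is `0` when the total
mass vanishes. -/
def meanShift (w : ι → ℝ) (k : ℝ → ℝ) (x : ι → E) (y : E) : E :=
  Finset.univ.centerMass (fun i => w i * k (‖y - x i‖ ^ 2 / 2)) fun i => x i - y

variable {Khat Kcheck : ℝ → ℝ} {w : ι → ℝ}

namespace AssumptionQM

theorem mul_norm_meanShift_sq_le_radialKernelSum_sub (hQM : AssumptionQM Khat Kcheck)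
    (hw : ∀ i, 0 ≤ w i) (x : ι → E) (y : E) :
    radialKernelSum w Kcheck x y * ‖meanShift w Kcheck x y‖ ^ 2 / 2 ≤
      radialKernelSum w Khat x (y + meanShift w Kcheck x y) - radialKernelSum w Khat x y := by
  have quadratic_at_center := sum_mul_norm_sq_sub_norm_centerMass_sub_sq Finset.univ
    (fun i => w i * Kcheck (‖y - x i‖ ^ 2 / 2)) fun i => x i - y
  refine le_of_eq_of_le ?_ (hQM.sum_mul_norm_sq_sub_le_radialKernelSum_sub hw x y _)
  rw [radialKernelSum, meanShift, ← quadratic_at_center]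
  simp only [norm_sub_rev (x _) y, sub_sub_eq_add_sub, add_comm]

theorem radialKernelSum_le_add_meanShift (hQM : AssumptionQM Khat Kcheck)
    (hw : ∀ i, 0 ≤ w i) (x : ι → E) (y : E) :
    radialKernelSum w Khat x y ≤ radialKernelSum w Khat x (y + meanShift w Kcheck x y) := by
  have mass_nonneg := radialKernelSum_nonneg (fun _ => hQM.Kcheck_nonneg) hw x y
  rw [← sub_nonneg]
  exact le_trans (by positivity) (hQM.mul_norm_meanShift_sq_le_radialKernelSum_sub hw x y)

end AssumptionQM

theorem ms_density_ascent_and_convergence_general (hQM : AssumptionQM Khat Kcheck)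
    (hw : ∀ i, 0 ≤ w i) (x : ι → E) (y : ℕ → E)
    (hy : ∀ t, y (t + 1) = y t + meanShift w Kcheck x (y t)) :
    (∀ t, radialKernelSum w Khat x (y t) ≤ radialKernelSum w Khat x (y (t + 1))) ∧
      ∃ c, Tendsto (fun t => radialKernelSum w Khat x (y t)) atTop (𝓝 c) := by
  have ascent (t : ℕ) : radialKernelSum w Khat x (y t) ≤ radialKernelSum w Khat x (y (t + 1)) :=
    hy t ▸ hQM.radialKernelSum_le_add_meanShift hw x (y t)
  have bounded : BddAbove (range fun t => radialKernelSum w Khat x (y t)) :=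
    ⟨(∑ i, w i) * Khat 0,
      forall_mem_range.mpr fun t => radialKernelSum_le_of_antitoneOn hQM.antitoneOn hw x (y t)⟩
  exact ⟨ascent, _, tendsto_atTop_ciSup (monotone_nat_of_le_succ ascent) bounded⟩

end MeanShift

section Bandwidth

variable {d n : ℕ}

theorem KDE_eq_radialKernelSum {K : Euc d → ℝ} {Khat : ℝ → ℝ}
    (hK : ∀ z, K z = Khat (‖z‖ ^ 2 / 2)) (x : Fin n → Euc d) (h : ℝ) (y : Euc d) :
    KDE d n K x h y =
      radialKernelSum (fun _ => 1 / (n * h ^ d)) Khat (fun i => h⁻¹ • x i) (h⁻¹ • y) := by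
  simp only [KDE, radialKernelSum, hK, smul_sub, Finset.mul_sum]

theorem inv_smul_msMap (Kcheck : ℝ → ℝ) (x : Fin n → Euc d) (h : ℝ) (y : Euc d) :
    h⁻¹ • msMap d n Kcheck x h y =
      meanShift (fun _ => 1 / (n * h ^ d)) Kcheck (fun i => h⁻¹ • x i) (h⁻¹ • y) := by
  simp only [meanShift, ← smul_sub, Finset.centerMass_smul]
  congr 1
  by_cases hf : fcheck d n Kcheck x h y = 0
  · rw [msMap, if_pos hf, Finset.centerMass, ← Finset.mul_sum, ← fcheck, hf, inv_zero, zero_smul]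
  · rw [msMap, if_neg hf]
    exact (Finset.centerMass_smul_left (hc := left_ne_zero_of_mul hf) ..).symm

theorem MSSeq.inv_smul_succ {Kcheck : ℝ → ℝ} {x : Fin n → Euc d} {h : ℝ} {y : ℕ → Euc d}
    (hy : MSSeq d n Kcheck x h y) (t : ℕ) :
    h⁻¹ • y (t + 1) = h⁻¹ • y t +
      meanShift (fun _ => 1 / (n * h ^ d)) Kcheck (fun i => h⁻¹ • x i) (h⁻¹ • y t) := by
  rw [hy t, smul_add, inv_smul_msMap]

end Bandwidth

/-- Under Assumptions RS and QM, for the mode estimate sequence `(y t)` obtained by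
the MS iteration from any starting point, the density estimate sequence `(f (y t))` is
non-decreasing and converges. -/
theorem ms_density_ascent_and_convergence
    (d n : ℕ) (hd : 0 < d) (hn : 0 < n)
    (K : Euc d → ℝ) (Khat Kcheck : ℝ → ℝ)
    (hRS : AssumptionRS d K Khat) (hQM : AssumptionQM Khat Kcheck)
    (x : Fin n → Euc d) (h : ℝ) (hh : 0 < h)
    (y : ℕ → Euc d) (hy : MSSeq d n Kcheck x h y) :
    (∀ t : ℕ, KDE d n K x h (y t) ≤ KDE d n K x h (y (t + 1))) ∧
    ∃ c : ℝ, Filter.Tendsto (fun t : ℕ => KDE d n K x h (y t)) Filter.atTop (nhds c) := by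
  simpa only [KDE_eq_radialKernelSum hRS.radial] using
    ms_density_ascent_and_convergence_general hQM (fun _ => by positivity) _ _ hy.inv_smul_succ
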